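/- arXiv:2506.17992 — 6 statements merged into one kernel-verified Lean document; each statement's English description precedes it below -/
import Mathlib

section
/- Let p = π/2, let y be a nonzero real number with y/p not an integer, and let p' be a positive real number with p·p' > 2.4. Set σ = |p − p'|. If y/p' − ⌊y/p'⌋ < 1/2, σ < (2.4/|y|)·(y/p' − ⌊y/p'⌋), and σ < (2.4/|y|)·(1/2 + ⌊y/p'⌋ − y/p'), then ⌊y/p⌋ = ⌊y/p'⌋ and y/p − ⌊y/p⌋ < 1/2. -/
/-!
Since `y / p - y / p' = y (p' - p) / (p p')` and `p p' > 2.4`, the quotients differ by at most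
`|y| σ / 2.4`. The two bounds on `σ` say that this is smaller than both the distance from `y / p'`
down to `⌊y / p'⌋` and the distance up to `⌊y / p'⌋ + 1 / 2`, so `y / p` lies between these two
points. The floors agree because `⌊y / p'⌋ + 1 / 2` does not pass the next integer, which remains
true of `⌊y / p'⌋ + θ` for any threshold `θ ≤ 1`.
-/

open Real

section FloorStability

variable {K : Type*}

theorem abs_div_sub_div_eq_mul_abs_sub_div [Field K] [LinearOrder K] [IsStrictOrderedRing K]
    {p q : K} (y : K) (hp : p ≠ 0) (hq : q ≠ 0) :
    |y / p - y / q| = |y| * |p - q| / |p * q| := by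
  rw [div_sub_div y y hp hq, mul_comm p y, ← mul_sub, abs_div, abs_mul, abs_sub_comm q p]

theorem abs_div_sub_div_le_of_le_abs_mul [Field K] [LinearOrder K] [IsStrictOrderedRing K]
    {p q c : K} (y : K) (hc : 0 < c) (hpq : c ≤ |p * q|) :
    |y / p - y / q| ≤ |y| * |p - q| / c := by
  obtain ⟨hp, hq⟩ : p ≠ 0 ∧ q ≠ 0 := mul_ne_zero_iff.mp (abs_pos.mp (hc.trans_le hpq))
  rw [abs_div_sub_div_eq_mul_abs_sub_div y hp hq]
  gcongr

theorem floor_eq_and_fract_lt_of_abs_sub_le [CommRing K] [LinearOrder K] [IsStrictOrderedRing K]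
    [FloorRing K] {x a θ : K} (hθ : θ ≤ 1) (hlow : |x - a| ≤ Int.fract a)
    (hupp : |x - a| < θ - Int.fract a) :
    ⌊x⌋ = ⌊a⌋ ∧ Int.fract x < θ := by
  have hfloor_le : (⌊a⌋ : K) ≤ x := by
    linarith [neg_le_of_abs_le hlow, Int.self_sub_fract a]
  have hlt : x < ⌊a⌋ + θ := by
    linarith [lt_of_abs_lt hupp, Int.self_sub_fract a]
  have hfloor : ⌊x⌋ = ⌊a⌋ := Int.floor_eq_iff.mpr ⟨hfloor_le, by linarith⟩
  refine ⟨hfloor, ?_⟩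
  rwa [Int.fract, hfloor, sub_lt_iff_lt_add']

theorem floor_eq_and_fract_lt_half_general [Field K] [LinearOrder K] [IsStrictOrderedRing K]
    [FloorRing K] {y p p' c θ : K} (hy : y ≠ 0) (hc : 0 < c) (hpp' : c ≤ |p * p'|) (hθ : θ ≤ 1)
    (hlow : |p - p'| ≤ c / |y| * Int.fract (y / p'))
    (hupp : |p - p'| < c / |y| * (θ - Int.fract (y / p'))) :
    ⌊y / p⌋ = ⌊y / p'⌋ ∧ Int.fract (y / p) < θ := by
  have hy_pos : 0 < |y| := abs_pos.mpr hy
  have herror := abs_div_sub_div_le_of_le_abs_mul y hc hpp'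
  rw [div_mul_eq_mul_div, le_div_iff₀' hy_pos, ← div_le_iff₀' hc] at hlow
  rw [div_mul_eq_mul_div, lt_div_iff₀' hy_pos, ← div_lt_iff₀' hc] at hupp
  exact floor_eq_and_fract_lt_of_abs_sub_le hθ (herror.trans hlow) (herror.trans_lt hupp)

end FloorStability

theorem floor_eq_and_fract_lt_half (y : ℝ) (hy : y ≠ 0) (p : ℝ) (hp : p = Real.pi / 2)
    (hnotint : ∀ k : ℤ, y / p ≠ (k : ℝ))
    (p' : ℝ) (hp' : 0 < p') (hpp' : p * p' > 2.4)
    (σ : ℝ) (hσ : σ = |p - p'|)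
    (hhalf : y / p' - ⌊y / p'⌋ < 1 / 2)
    (h1 : σ < (2.4 / |y|) * (y / p' - ⌊y / p'⌋))
    (h2 : σ < (2.4 / |y|) * (1 / 2 + ⌊y / p'⌋ - y / p')) :
    ⌊y / p⌋ = ⌊y / p'⌋ ∧ y / p - ⌊y / p⌋ < 1 / 2 := by
  rw [← sub_sub_eq_add_sub, hσ] at h2
  exact floor_eq_and_fract_lt_half_general hy (by norm_num) (hpp'.le.trans (le_abs_self _))
    (by norm_num) (hσ ▸ h1.le) h2
end

section
/- Let p = π/2, let y be a nonzero rational number, let m₀ be a natural number, and let (p_i)_{i≥0} be a sequence of positive real numbers with |p − p_i| ≤ 10^{−(m₀+i)} for all i. Set t_i = y/p_i − ⌊y/p_i⌋. Then there exists an index i such that either 2.4·10^{m₀+i}·min{t_i, 1/2 − t_i} ≥ |y| or 2.4·10^{m₀+i}·min{1 − t_i, t_i − 1/2} ≥ |y|. In other words, the two inequalities 2.4·10^{m₀+i}·min{t_i, 1/2 − t_i} < |y| and 2.4·10^{m₀+i}·min{1 − t_i, t_i − 1/2} < |y| cannot both hold for every i. -/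
open Real

/-!
The quotients `y / p i` converge to the irrational number `y / (π / 2)`, so their fractional parts
converge to some `T ∈ (0, 1)` with `T ≠ 1 / 2`. Then either `min T (1 / 2 - T)` or
`min (1 - T) (T - 1 / 2)` is positive, and a positive limit scaled by a factor tending to infinity
eventually exceeds any bound.
-/

open Filter Topology

theorem tendsto_pow_const_add_atTop {b : ℝ} (hb : 1 < b) (m : ℕ) :
    Tendsto (fun i : ℕ => b ^ (m + i)) atTop atTop :=
  (tendsto_pow_atTop_atTop_of_one_lt hb).comp
    (tendsto_atTop_mono (fun i => Nat.le_add_left i m) tendsto_id)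

theorem tendsto_of_abs_sub_le_one_div_pow {a b : ℝ} (hb : 1 < b) {m : ℕ} {p : ℕ → ℝ}
    (hp : ∀ i, |a - p i| ≤ 1 / b ^ (m + i)) : Tendsto p atTop (𝓝 a) := by
  have herror : Tendsto (fun i : ℕ => 1 / b ^ (m + i)) atTop (𝓝 0) :=
    (tendsto_pow_const_add_atTop hb m).const_div_atTop 1
  refine tendsto_iff_dist_tendsto_zero.2 (squeeze_zero (fun _ => dist_nonneg) (fun i => ?_) herror)
  rw [dist_comm, Real.dist_eq]
  exact hp i

theorem min_pos_or_min_pos_of_ne_half {T : ℝ} (h₀ : 0 < T) (h₁ : T < 1) (hhalf : T ≠ 1 / 2) :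
    0 < min T (1 / 2 - T) ∨ 0 < min (1 - T) (T - 1 / 2) :=
  hhalf.lt_or_gt.imp (fun h => lt_min h₀ (sub_pos.2 h))
    (fun h => lt_min (sub_pos.2 h₁) (sub_pos.2 h))

section Fract

variable {ι : Type*} {l : Filter ι} {c : ι → ℝ}

theorem eventually_le_mul_min_fract {u : ι → ℝ} {x : ℝ} (hzero : Int.fract x ≠ 0)
    (hhalf : Int.fract x ≠ 1 / 2) (hu : Tendsto u l (𝓝 x)) (hc : Tendsto c l atTop) (B : ℝ) :
    ∀ᶠ i in l,
      B ≤ c i * min (Int.fract (u i)) (1 / 2 - Int.fract (u i)) ∨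
      B ≤ c i * min (1 - Int.fract (u i)) (Int.fract (u i) - 1 / 2) := by
  have hfract : Tendsto (fun i => Int.fract (u i)) l (𝓝 (Int.fract x)) :=
    (continuousAt_fract (sub_ne_zero.1 hzero)).tendsto.comp hu
  have hpos : 0 < Int.fract x := (Int.fract_nonneg x).lt_of_ne' hzero
  rcases min_pos_or_min_pos_of_ne_half hpos (Int.fract_lt_one x) hhalf with hleft | hright
  · have hlim := hc.atTop_mul_pos hleft (hfract.min (hfract.const_sub (1 / 2)))
    exact (hlim.eventually_ge_atTop B).mono fun _ => Or.inl
  · have hlim := hc.atTop_mul_pos hright ((hfract.const_sub 1).min (hfract.sub_const (1 / 2)))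
    exact (hlim.eventually_ge_atTop B).mono fun _ => Or.inr

theorem algorithm_terminates_general {a : ℝ} (ha : Irrational a) {y : ℚ} (hy : y ≠ 0)
    {p : ι → ℝ} (hp : Tendsto p l (𝓝 a)) (hc : Tendsto c l atTop) (B : ℝ) :
    ∀ᶠ i in l,
      B ≤ c i * min (Int.fract (y / p i)) (1 / 2 - Int.fract (y / p i)) ∨
      B ≤ c i * min (1 - Int.fract (y / p i)) (Int.fract (y / p i) - 1 / 2) := by
  have hfract : Irrational (Int.fract ((y : ℝ) / a)) := (ha.ratCast_div hy).sub_intCast _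
  have hhalf : Int.fract ((y : ℝ) / a) ≠ 1 / 2 := by simpa using hfract.ne_rat (1 / 2)
  exact eventually_le_mul_min_fract hfract.ne_zero hhalf (tendsto_const_nhds.div hp ha.ne_zero) hc B

end Fract

theorem irrational_pi_div_two : Irrational (π / 2) :=
  irrational_pi.div_natCast two_ne_zero

theorem algorithm_terminates (y : ℚ) (hy : y ≠ 0) (m₀ : ℕ)
    (p : ℕ → ℝ) (hppos : ∀ i, 0 < p i)
    (hp : ∀ i, |Real.pi / 2 - p i| ≤ 1 / 10 ^ (m₀ + i))
    (t : ℕ → ℝ) (ht : ∀ i, t i = (y : ℝ) / p i - ⌊(y : ℝ) / p i⌋) :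
    ∃ i : ℕ,
      2.4 * 10 ^ (m₀ + i) * min (t i) (1 / 2 - t i) ≥ |(y : ℝ)| ∨
      2.4 * 10 ^ (m₀ + i) * min (1 - t i) (t i - 1 / 2) ≥ |(y : ℝ)| := by
  have hplim : Tendsto p atTop (𝓝 (π / 2)) := tendsto_of_abs_sub_le_one_div_pow (by norm_num) hp
  have hscale : Tendsto (fun i : ℕ => (2.4 : ℝ) * 10 ^ (m₀ + i)) atTop atTop :=
    (tendsto_pow_const_add_atTop (by norm_num) m₀).const_mul_atTop (by norm_num)
  obtain rfl : t = fun i => Int.fract ((y : ℝ) / p i) := funext ht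
  exact (algorithm_terminates_general irrational_pi_div_two hy hplim hscale |(y : ℝ)|).exists
end

section
/- Let y be a nonzero real number, let r be a positive integer, let p' be a positive real number with |π/2 − p'| < 1/((|y|/1.5 + 1)·10^{r+1}), let k₀ be an even integer with |k₀| < |y|/1.5 + 1, and let n be a natural number with |y − k₀·p'|^{n+1}/(n+1)! < 1/10^{r+1}. Then |sin y − (−1)^{k₀/2}·P_n(y − k₀·p')| < 1/10^r. -/
/-!
For even `k`, the shift `y - k π/2` changes `sin y` only by the sign `(-1)^(k/2)`. Replacing `π/2`
by `p'` in this reduction moves the argument by `|k| |π/2 - p'|`, which moves the 1-Lipschitz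
function `sin` by at most as much; truncating the sine series at the reduced argument adds the
Lagrange remainder. Each of the two errors is below `10^-(r+1)`.
-/

open Real

/-- Taylor polynomial of sine: `P n y = ∑_{m=0}^{⌊(n-1)/2⌋} (-1)^m y^(2m+1)/(2m+1)!`
(empty sum when `n = 0`). -/
noncomputable def sinTaylor (n : ℕ) (y : ℝ) : ℝ :=
  ∑ m ∈ Finset.range ((n + 1) / 2),
    (-1 : ℝ) ^ m * y ^ (2 * m + 1) / (Nat.factorial (2 * m + 1))

lemma abs_sub_taylorWithinEval_le_of_abs_iteratedDeriv_le {f : ℝ → ℝ} {x₀ x C : ℝ} {n : ℕ}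
    (hf : ContDiffOn ℝ (n + 1) f (Set.uIcc x₀ x))
    (hC : ∀ t ∈ Set.uIoo x₀ x, |iteratedDeriv (n + 1) f t| ≤ C) :
    |f x - taylorWithinEval f n (Set.uIcc x₀ x) x₀ x| ≤
      C * |x - x₀| ^ (n + 1) / (n + 1).factorial := by
  rcases eq_or_ne x₀ x with rfl | hx
  · simp
  obtain ⟨t, ht, hremainder⟩ := taylor_mean_remainder_lagrange_iteratedDeriv hx hf
  rw [hremainder, abs_div, abs_mul, abs_pow, Nat.abs_cast]
  gcongr
  exact hC t ht

lemma sinTaylor_zero_left (x : ℝ) : sinTaylor 0 x = 0 := by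
  simp [sinTaylor]

lemma sinTaylor_zero_right (n : ℕ) : sinTaylor n 0 = 0 := by
  simp [sinTaylor]

lemma sinTaylor_succ (n : ℕ) (x : ℝ) :
    sinTaylor (n + 1) x =
      sinTaylor n x + x ^ (n + 1) / (n + 1).factorial * iteratedDeriv (n + 1) sin 0 := by
  rcases Nat.even_or_odd' n with ⟨m, rfl | rfl⟩
  · have hcount : (2 * m + 1) / 2 = m := by omega
    have hcount_succ : (2 * m + 1 + 1) / 2 = m + 1 := by omega
    have hderiv : iteratedDeriv (2 * m + 1) sin 0 = (-1) ^ m := by simp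
    rw [sinTaylor, sinTaylor, hcount, hcount_succ, Finset.sum_range_succ, hderiv]
    ring
  · have hcount : (2 * m + 1 + 1 + 1) / 2 = (2 * m + 1 + 1) / 2 := by omega
    have hderiv : iteratedDeriv (2 * (m + 1)) sin 0 = 0 := by simp [iteratedDeriv_even_sin]
    rw [sinTaylor, sinTaylor, hcount, show 2 * m + 1 + 1 = 2 * (m + 1) by ring, hderiv,
      mul_zero, add_zero]

lemma taylorWithinEval_sin_zero {s : Set ℝ} (hs : UniqueDiffOn ℝ s) (h₀ : 0 ∈ s) (n : ℕ) (x : ℝ) :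
    taylorWithinEval sin n s 0 x = sinTaylor n x := by
  induction n with
  | zero => rw [taylor_within_zero_eval, sin_zero, sinTaylor_zero_left]
  | succ n ih =>
    rw [taylorWithinEval_succ, ih, sinTaylor_succ,
      iteratedDerivWithin_eq_iteratedDeriv hs contDiff_sin.contDiffAt h₀, smul_eq_mul, sub_zero,
      Nat.factorial_succ, Nat.cast_mul, Nat.cast_succ, div_eq_inv_mul]

lemma abs_sin_sub_sinTaylor_le (n : ℕ) (x : ℝ) :
    |sin x - sinTaylor n x| ≤ |x| ^ (n + 1) / (n + 1).factorial := by
  rcases eq_or_ne x 0 with rfl | hx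
  · simp [sinTaylor_zero_right]
  · simpa only [taylorWithinEval_sin_zero (uniqueDiffOn_uIcc hx.symm) Set.left_mem_uIcc,
      one_mul, sub_zero] using
      abs_sub_taylorWithinEval_le_of_abs_iteratedDeriv_le (x₀ := 0) (x := x) (n := n)
        contDiff_sin.contDiffOn fun t _ => abs_iteratedDeriv_sin_le_one (n + 1) t

lemma abs_sin_sub_neg_one_zpow_mul_sin_sub_le (j : ℤ) (y p : ℝ) :
    |sin y - (-1) ^ j * sin (y - j * p)| ≤ |(j : ℝ)| * |π - p| := by
  have hreduce : sin y = (-1) ^ j * sin (y - j * π) := by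
    rw [← sin_add_int_mul_pi, sub_add_cancel]
  calc |sin y - (-1) ^ j * sin (y - j * p)|
      = |sin (y - j * π) - sin (y - j * p)| := by
        rw [hreduce, ← mul_sub, abs_mul, abs_neg_one_zpow, one_mul]
    _ ≤ |(y - j * π) - (y - j * p)| := abs_sin_sub_sin_le _ _
    _ = |(j : ℝ)| * |π - p| := by
        rw [sub_sub_sub_cancel_left, ← mul_sub, abs_mul, abs_sub_comm]

lemma abs_sin_sub_neg_one_zpow_mul_sinTaylor_le {k : ℤ} (hk : Even k) (n : ℕ) (y p : ℝ) :
    |sin y - (-1) ^ (k / 2) * sinTaylor n (y - k * p)| ≤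
      |(k : ℝ)| * |π / 2 - p| + |y - k * p| ^ (n + 1) / (n + 1).factorial := by
  obtain ⟨j, rfl⟩ := hk.two_dvd
  have hshift : ((2 * j : ℤ) : ℝ) * p = j * (2 * p) := by push_cast; ring
  have hscale : |((2 * j : ℤ) : ℝ)| * |π / 2 - p| = |(j : ℝ)| * |π - 2 * p| := by
    rw [← abs_mul, ← abs_mul]
    push_cast
    ring_nf
  rw [Int.mul_ediv_cancel_left j two_ne_zero, hscale, hshift]
  have hreduction := abs_sin_sub_neg_one_zpow_mul_sin_sub_le j y (2 * p)
  have htruncation : |(-1) ^ j * sin (y - j * (2 * p)) - (-1) ^ j * sinTaylor n (y - j * (2 * p))|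
      ≤ |y - j * (2 * p)| ^ (n + 1) / (n + 1).factorial := by
    rw [← mul_sub, abs_mul, abs_neg_one_zpow, one_mul]
    exact abs_sin_sub_sinTaylor_le n _
  exact (abs_sub_le _ _ _).trans (add_le_add hreduction htruncation)

theorem sin_pointwise_accuracy_even (y : ℝ) (hy : y ≠ 0) (r : ℕ) (hr : 1 ≤ r)
    (p' : ℝ) (hp' : 0 < p')
    (hσ : |Real.pi / 2 - p'| < 1 / ((|y| / 1.5 + 1) * 10 ^ (r + 1)))
    (k₀ : ℤ) (hk₀even : Even k₀) (hk₀ : |(k₀ : ℝ)| < |y| / 1.5 + 1)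
    (n : ℕ) (hn : |y - k₀ * p'| ^ (n + 1) / (Nat.factorial (n + 1)) < 1 / 10 ^ (r + 1)) :
    |Real.sin y - (-1 : ℝ) ^ (k₀ / 2) * sinTaylor n (y - k₀ * p')| < 1 / 10 ^ r := by
  have hreduction : |(k₀ : ℝ)| * |π / 2 - p'| < 1 / 10 ^ (r + 1) :=
    calc |(k₀ : ℝ)| * |π / 2 - p'|
        ≤ (|y| / 1.5 + 1) * |π / 2 - p'| := by gcongr
      _ < (|y| / 1.5 + 1) * (1 / ((|y| / 1.5 + 1) * 10 ^ (r + 1))) := by gcongr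
      _ = 1 / 10 ^ (r + 1) := by field_simp
  calc |Real.sin y - (-1 : ℝ) ^ (k₀ / 2) * sinTaylor n (y - k₀ * p')|
      ≤ |(k₀ : ℝ)| * |π / 2 - p'| + |y - k₀ * p'| ^ (n + 1) / (n + 1).factorial :=
        abs_sin_sub_neg_one_zpow_mul_sinTaylor_le hk₀even n y p'
    _ < 1 / 10 ^ (r + 1) + 1 / 10 ^ (r + 1) := add_lt_add hreduction hn
    _ = 1 / 5 * (1 / 10 ^ r) := by ring
    _ < 1 / 10 ^ r := mul_lt_of_lt_one_left (by positivity) (by norm_num)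
end

section
/- Let y be a nonzero real number, let r be a positive integer, let p' be a positive real number with |π/2 − p'| < 1/((|y|/1.5 + 1)·10^{r+1}), let k₀ be an odd integer with |k₀| < |y|/1.5 + 1, and let n be a natural number with |y − k₀·p'|^{n+1}/(n+1)! < 1/10^{r+1}. Then |sin y − (−1)^{(k₀−1)/2}·Q_n(y − k₀·p')| < 1/10^r. -/
open Real

/-- Taylor polynomial of cosine: `Q n y = ∑_{m=0}^{⌊n/2⌋} (-1)^m y^(2m)/(2m)!`. -/
noncomputable def cosTaylor (n : ℕ) (y : ℝ) : ℝ :=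
  ∑ m ∈ Finset.range (n / 2 + 1),
    (-1 : ℝ) ^ m * y ^ (2 * m) / (Nat.factorial (2 * m))

/-!
For odd `k`, `sin y = (-1)^((k-1)/2) cos (y - k π/2)`, so the error splits as
`|cos (y - k π/2) - cos (y - k p')| + |cos (y - k p') - Q_n (y - k p')|`.
The first term is at most `|k| |π/2 - p'|` because cosine is 1-Lipschitz, the second at most
`|y - k p'|^(n+1)/(n+1)!` by Lagrange's form of the remainder. Each is below `1/10^(r+1)`, and
`2/10^(r+1) < 1/10^r`.
-/

theorem taylorWithinEval_eq_taylorWithinEval_univ {E : Type*} [NormedAddCommGroup E]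
    [NormedSpace ℝ E] {f : ℝ → E} {n : ℕ} {s : Set ℝ} {x₀ : ℝ} (hs : UniqueDiffOn ℝ s)
    (hx₀ : x₀ ∈ s) (hf : ContDiffAt ℝ n f x₀) (x : ℝ) :
    taylorWithinEval f n s x₀ x = taylorWithinEval f n Set.univ x₀ x := by
  simp only [taylor_within_apply]
  refine Finset.sum_congr rfl fun i hi => ?_
  have hin : i ≤ n := Nat.lt_succ_iff.mp (Finset.mem_range.mp hi)
  rw [iteratedDerivWithin_univ,
    iteratedDerivWithin_eq_iteratedDeriv hs (hf.of_le (by exact_mod_cast hin)) hx₀]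

theorem abs_sub_taylorWithinEval_univ_le {f : ℝ → ℝ} {n : ℕ} {x₀ x C : ℝ}
    (hf : ContDiffOn ℝ (n + 1) f (Set.uIcc x₀ x)) (hf₀ : ContDiffAt ℝ n f x₀)
    (hC : ∀ t ∈ Set.uIoo x₀ x, |iteratedDeriv (n + 1) f t| ≤ C) :
    |f x - taylorWithinEval f n Set.univ x₀ x| ≤
      C * |x - x₀| ^ (n + 1) / Nat.factorial (n + 1) := by
  rcases eq_or_ne x₀ x with rfl | hx
  · simp
  obtain ⟨t, ht, hremainder⟩ := taylor_mean_remainder_lagrange_iteratedDeriv hx hf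
  rw [← taylorWithinEval_eq_taylorWithinEval_univ (uniqueDiffOn_uIcc hx) Set.left_mem_uIcc hf₀,
    hremainder, abs_div, abs_mul, abs_pow, Nat.abs_cast]
  gcongr
  exact hC t ht

theorem cosTaylor_two_mul_add_one (m : ℕ) (x : ℝ) :
    cosTaylor (2 * m + 1) x = cosTaylor (2 * m) x := by
  have hdiv : (2 * m + 1) / 2 = 2 * m / 2 := by omega
  simp only [cosTaylor, hdiv]

theorem cosTaylor_two_mul_add_two (m : ℕ) (x : ℝ) :
    cosTaylor (2 * m + 2) x = cosTaylor (2 * m + 1) x +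
      (-1) ^ (m + 1) * x ^ (2 * m + 2) / Nat.factorial (2 * m + 2) := by
  have hdiv : (2 * m + 2) / 2 = (2 * m + 1) / 2 + 1 := by omega
  have hhalf : (2 * m + 1) / 2 = m := by omega
  simp only [cosTaylor, hdiv, hhalf, Finset.sum_range_succ _ (m + 1), mul_add_one]

theorem cosTaylor_eq_taylorWithinEval (n : ℕ) (x : ℝ) :
    cosTaylor n x = taylorWithinEval cos n Set.univ 0 x := by
  induction n with
  | zero => simp [cosTaylor]
  | succ n ih =>
    rw [taylorWithinEval_succ, iteratedDerivWithin_univ, ← ih]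
    rcases Nat.even_or_odd' n with ⟨m, rfl | rfl⟩
    · have hderiv : iteratedDeriv (2 * m + 1) cos 0 = 0 := by simp
      rw [cosTaylor_two_mul_add_one, hderiv, smul_zero, add_zero]
    · have hderiv : iteratedDeriv (2 * m + 1 + 1) cos 0 = (-1) ^ (m + 1) := by
        rw [add_assoc, one_add_one_eq_two, ← mul_add_one, iteratedDeriv_even_cos]
        simp
      rw [cosTaylor_two_mul_add_two, hderiv, Nat.factorial_succ (2 * m + 1), smul_eq_mul]
      push_cast
      ring

theorem abs_cos_sub_cosTaylor_le (n : ℕ) (x : ℝ) :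
    |cos x - cosTaylor n x| ≤ |x| ^ (n + 1) / Nat.factorial (n + 1) := by
  simpa only [cosTaylor_eq_taylorWithinEval, sub_zero, one_mul] using
    abs_sub_taylorWithinEval_univ_le (x₀ := 0) (x := x) contDiff_cos.contDiffOn
      contDiff_cos.contDiffAt fun t _ => abs_iteratedDeriv_cos_le_one (n + 1) t

theorem sin_eq_neg_one_zpow_mul_cos_sub_odd_mul_pi_div_two {k : ℤ} (hk : Odd k) (y : ℝ) :
    sin y = (-1) ^ ((k - 1) / 2) * cos (y - k * (π / 2)) := by
  obtain ⟨j, rfl⟩ := hk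
  have hj : (2 * j + 1 - 1) / 2 = j := by omega
  rw [hj, ← cos_sub_pi_div_two, ← sub_add_cancel (y - π / 2) (j * π), cos_add_int_mul_pi]
  push_cast
  ring_nf

theorem abs_sin_sub_neg_one_zpow_mul_cosTaylor_le {k : ℤ} (hk : Odd k) (n : ℕ) (y p : ℝ) :
    |sin y - (-1) ^ ((k - 1) / 2) * cosTaylor n (y - k * p)| ≤
      |(k : ℝ)| * |π / 2 - p| + |y - k * p| ^ (n + 1) / Nat.factorial (n + 1) := by
  have hlipschitz : |cos (y - k * (π / 2)) - cos (y - k * p)| ≤ |(k : ℝ)| * |π / 2 - p| :=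
    calc |cos (y - k * (π / 2)) - cos (y - k * p)|
        ≤ |(y - k * (π / 2)) - (y - k * p)| := abs_cos_sub_cos_le _ _
      _ = |(k : ℝ)| * |π / 2 - p| := by
        rw [sub_sub_sub_cancel_left, abs_sub_comm, ← mul_sub, abs_mul]
  calc |sin y - (-1) ^ ((k - 1) / 2) * cosTaylor n (y - k * p)|
      = |cos (y - k * (π / 2)) - cosTaylor n (y - k * p)| := by
        rw [sin_eq_neg_one_zpow_mul_cos_sub_odd_mul_pi_div_two hk, ← mul_sub, abs_mul,
          abs_neg_one_zpow, one_mul]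
    _ ≤ |cos (y - k * (π / 2)) - cos (y - k * p)| +
          |cos (y - k * p) - cosTaylor n (y - k * p)| := abs_sub_le _ _ _
    _ ≤ |(k : ℝ)| * |π / 2 - p| + |y - k * p| ^ (n + 1) / Nat.factorial (n + 1) :=
        add_le_add hlipschitz (abs_cos_sub_cosTaylor_le n _)

theorem sin_pointwise_accuracy_odd (y : ℝ) (hy : y ≠ 0) (r : ℕ) (hr : 1 ≤ r)
    (p' : ℝ) (hp' : 0 < p')
    (hσ : |Real.pi / 2 - p'| < 1 / ((|y| / 1.5 + 1) * 10 ^ (r + 1)))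
    (k₀ : ℤ) (hk₀odd : Odd k₀) (hk₀ : |(k₀ : ℝ)| < |y| / 1.5 + 1)
    (n : ℕ) (hn : |y - k₀ * p'| ^ (n + 1) / (Nat.factorial (n + 1)) < 1 / 10 ^ (r + 1)) :
    |Real.sin y - (-1 : ℝ) ^ ((k₀ - 1) / 2) * cosTaylor n (y - k₀ * p')| < 1 / 10 ^ r := by
  have hphase : |(k₀ : ℝ)| * |π / 2 - p'| < 1 / 10 ^ (r + 1) :=
    calc |(k₀ : ℝ)| * |π / 2 - p'| ≤ (|y| / 1.5 + 1) * |π / 2 - p'| := by gcongr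
      _ < (|y| / 1.5 + 1) * (1 / ((|y| / 1.5 + 1) * 10 ^ (r + 1))) := by gcongr
      _ = 1 / 10 ^ (r + 1) := by field_simp
  calc |sin y - (-1) ^ ((k₀ - 1) / 2) * cosTaylor n (y - k₀ * p')|
      ≤ |(k₀ : ℝ)| * |π / 2 - p'| + |y - k₀ * p'| ^ (n + 1) / Nat.factorial (n + 1) :=
        abs_sin_sub_neg_one_zpow_mul_cosTaylor_le hk₀odd n y p'
    _ < 1 / 10 ^ (r + 1) + 1 / 10 ^ (r + 1) := add_lt_add hphase hn
    _ = 1 / 5 * (1 / 10 ^ r) := by ring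
    _ < 1 / 10 ^ r := mul_lt_of_lt_one_left (by positivity) (by norm_num)
end

section
/- Let b ≥ 0.8 be a real number, let r ≥ 1 be an integer, and let σ be a real number with 0 ≤ σ < 1/((2b+4)·10^{r+1}). Let p₀ and p₁ be real numbers with |π/2 − p₀| ≤ σ and |π/2 − p₁| ≤ σ, and let k₀ be an integer with 0 ≤ k₀ < b + 1.5. Then |(k₀ + 1/2)·p₀ − (k₀ + 1)·p₁| < 0.8. -/
/-!
With `p = π / 2` one has `(k + 1 / 2) * p - (k + 1) * p = -π / 4`, and replacing `p` by
approximations with error at most `σ` perturbs this by at most `(2 * k + 3 / 2) * σ`. As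
`2 * k + 3 / 2 ≤ 2 * b + 9 / 2 ≤ 5 / 4 * (2 * b + 4)`, the bound on `σ` keeps the perturbation
below `5 / (4 * 10 ^ (r + 1)) ≤ 0.0125`, and `π < 3.15` gives `π / 4 + 0.0125 < 0.8`.
-/

open Real

lemma abs_mul_sub_mul_le_of_abs_sub_le {R : Type*} [CommRing R] [LinearOrder R]
    [IsStrictOrderedRing R] {x y z ε δ : R} (hx : |z - x| ≤ ε) (hy : |z - y| ≤ δ) (a c : R) :
    |a * x - c * y| ≤ |a - c| * |z| + (|a| * ε + |c| * δ) := by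
  calc |a * x - c * y|
      = |(a - c) * z - (a * (z - x) - c * (z - y))| := by ring_nf
    _ ≤ |(a - c) * z| + (|a * (z - x)| + |c * (z - y)|) :=
        (abs_sub _ _).trans (by gcongr; exact abs_sub _ _)
    _ = |a - c| * |z| + (|a| * |z - x| + |c| * |z - y|) := by simp only [abs_mul]
    _ ≤ |a - c| * |z| + (|a| * ε + |c| * δ) := by gcongr

lemma two_mul_add_three_halves_mul_lt {K : Type*} [Field K] [LinearOrder K] [IsStrictOrderedRing K]
    {b k σ N : K} (hb : -1 ≤ b) (hk : k ≤ b + 3 / 2) (hN : 0 < N) (hσ0 : 0 ≤ σ)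
    (hσ : σ < 1 / ((2 * b + 4) * N)) :
    (2 * k + 3 / 2) * σ < 5 / (4 * N) := by
  have hD : 0 < 2 * b + 4 := by linarith
  have hcoeff : 2 * k + 3 / 2 ≤ 5 / 4 * (2 * b + 4) := by linarith
  calc (2 * k + 3 / 2) * σ
      ≤ 5 / 4 * (2 * b + 4) * σ := by gcongr
    _ < 5 / 4 * (2 * b + 4) * (1 / ((2 * b + 4) * N)) := by gcongr
    _ = 5 / (4 * N) := by field_simp

lemma pi_div_four_add_five_div_lt {r : ℕ} (hr : 1 ≤ r) :
    π / 4 + 5 / (4 * 10 ^ (r + 1)) < 0.8 := by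
  calc π / 4 + 5 / (4 * 10 ^ (r + 1))
      ≤ π / 4 + 5 / (4 * 10 ^ (1 + 1)) := by gcongr; norm_num
    _ < 3.15 / 4 + 5 / (4 * 10 ^ (1 + 1)) := by gcongr; exact pi_lt_d2
    _ = 0.8 := by norm_num

theorem consecutive_interval_estimate_general {b : ℝ} (hb : -1 ≤ b) (r : ℕ) {σ : ℝ}
    (hσ : σ < 1 / ((2 * b + 4) * 10 ^ (r + 1))) {p₀ p₁ : ℝ} (hp₀ : |π / 2 - p₀| ≤ σ)
    (hp₁ : |π / 2 - p₁| ≤ σ) {k : ℝ} (hk0 : -1 / 2 ≤ k) (hk : k ≤ b + 3 / 2) :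
    |(k + 1 / 2) * p₀ - (k + 1) * p₁| < π / 4 + 5 / (4 * 10 ^ (r + 1)) := by
  have hσ0 : 0 ≤ σ := (abs_nonneg _).trans hp₀
  have hdiff : |k + 1 / 2 - (k + 1)| = 1 / 2 := by
    rw [show k + 1 / 2 - (k + 1) = -(1 / 2) by ring, abs_neg, abs_of_pos one_half_pos]
  calc |(k + 1 / 2) * p₀ - (k + 1) * p₁|
      ≤ |k + 1 / 2 - (k + 1)| * |π / 2| + (|k + 1 / 2| * σ + |k + 1| * σ) :=
        abs_mul_sub_mul_le_of_abs_sub_le hp₀ hp₁ _ _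
    _ = π / 4 + (2 * k + 3 / 2) * σ := by
        rw [hdiff, abs_of_pos pi_div_two_pos, abs_of_nonneg (by linarith : 0 ≤ k + 1 / 2),
          abs_of_nonneg (by linarith : 0 ≤ k + 1)]
        ring
    _ < π / 4 + 5 / (4 * 10 ^ (r + 1)) := by
        gcongr
        exact two_mul_add_three_halves_mul_lt hb hk (by positivity) hσ0 hσ

theorem consecutive_interval_estimate (b : ℝ) (hb : 0.8 ≤ b) (r : ℕ) (hr : 1 ≤ r)
    (σ : ℝ) (hσ0 : 0 ≤ σ) (hσ : σ < 1 / ((2 * b + 4) * 10 ^ (r + 1)))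
    (p₀ p₁ : ℝ) (hp₀ : |Real.pi / 2 - p₀| ≤ σ) (hp₁ : |Real.pi / 2 - p₁| ≤ σ)
    (k₀ : ℤ) (hk₀0 : 0 ≤ k₀) (hk₀ : (k₀ : ℝ) < b + 1.5) :
    |((k₀ : ℝ) + 1 / 2) * p₀ - ((k₀ : ℝ) + 1) * p₁| < 0.8 := by
  have hk : (0 : ℝ) ≤ k₀ := Int.cast_nonneg hk₀0
  exact (consecutive_interval_estimate_general (by linarith) r hσ hp₀ hp₁ (by linarith)
    (by linarith)).trans (pi_div_four_add_five_div_lt hr)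
end

section
/- Let a, b be real numbers with 0.8 ≤ a < b, let r ≥ 1 be an integer, and let σ be a real number with 0 ≤ σ < 1/((2b+4)·10^{r+1}). Let p₀ and q₀ be real numbers with |π/2 − p₀| ≤ σ and |π/2 − q₀| ≤ σ, and let k₀, n₀ be integers with |a − k₀·p₀| ≤ p₀/2 and |b − n₀·q₀| ≤ q₀/2. Then k₀ ≥ 1, and k₀ ≤ n₀ + 1 (i.e., if k₀ ≥ n₀ then k₀ − n₀ ≤ 1). -/
open Real

/-!
Dividing by the approximate periods, `k` and `n` are integers nearest to `a / p` and `b / q`. Hence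
`1 ≤ k` once `p < 2 a`, and `k ≤ n + 1` once `a / p - b / q < 1`. If `p` and `q` are within `σ` of
the true period `P` and `0 ≤ b`, `a ≤ b`, then
`a / p - b / q ≤ b / (P - σ) - b / (P + σ) = 2 b σ / (P² - σ²)`, which is small for small `b σ`.
-/

section LinearOrderedField

variable {K : Type*} [Field K] [LinearOrder K] [IsStrictOrderedRing K]

lemma abs_div_sub_le_half_of_abs_sub_mul_le {x y p : K} (hp : 0 < p)
    (h : |x - y * p| ≤ p / 2) : |x / p - y| ≤ 1 / 2 := by
  rw [div_sub' hp.ne', abs_div, abs_of_pos hp, div_le_iff₀ hp, mul_comm p y]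
  linarith

lemma one_le_of_abs_sub_intCast_le_half {x : K} {k : ℤ} (hk : |x - k| ≤ 1 / 2)
    (hx : 1 / 2 < x) : 1 ≤ k := by
  have hk_pos : (0 : K) < k := by linarith [(abs_le.mp hk).2]
  exact_mod_cast hk_pos

lemma le_add_one_of_abs_sub_intCast_le_half {x y : K} {k n : ℤ} (hk : |x - k| ≤ 1 / 2)
    (hn : |y - n| ≤ 1 / 2) (hxy : x - y < 1) : k ≤ n + 1 := by
  have hkn : (k : K) < n + 1 + 1 := by linarith [(abs_le.mp hk).1, (abs_le.mp hn).2]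
  exact Int.lt_add_one_iff.mp (by exact_mod_cast hkn)

lemma div_sub_div_le_of_abs_sub_le {a b P p q σ : K} (hσP : σ < P) (hb : 0 ≤ b) (hab : a ≤ b)
    (hp : |P - p| ≤ σ) (hq : |P - q| ≤ σ) :
    a / p - b / q ≤ 2 * b * σ / (P ^ 2 - σ ^ 2) := by
  obtain ⟨-, hp_lower⟩ := abs_le.mp hp
  obtain ⟨hq_upper, hq_lower⟩ := abs_le.mp hq
  have hsub : 0 < P - σ := sub_pos.mpr hσP
  have hq_pos : 0 < q := by linarith
  have hadd : 0 < P + σ := by linarith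
  calc a / p - b / q ≤ b / (P - σ) - b / (P + σ) := by
        gcongr <;> linarith
    _ = 2 * b * σ / (P ^ 2 - σ ^ 2) := by
        rw [div_sub_div _ _ hsub.ne' hadd.ne']
        congr 1 <;> ring

theorem initial_indices_estimate_general {a b P p q σ : K} {k n : ℤ}
    (hσP : σ < P) (ha : P + σ < 2 * a) (hab : a ≤ b) (hb : 2 * b * σ < P ^ 2 - σ ^ 2)
    (hp : |P - p| ≤ σ) (hq : |P - q| ≤ σ)
    (hk : |a - k * p| ≤ p / 2) (hn : |b - n * q| ≤ q / 2) :
    1 ≤ k ∧ k ≤ n + 1 := by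
  obtain ⟨hp_upper, hp_lower⟩ := abs_le.mp hp
  have hσ : 0 ≤ σ := (abs_nonneg _).trans hp
  have hp_pos : 0 < p := by linarith
  have hq_pos : 0 < q := by linarith [(abs_le.mp hq).2]
  have hk_near : |a / p - k| ≤ 1 / 2 := abs_div_sub_le_half_of_abs_sub_mul_le hp_pos hk
  have hn_near : |b / q - n| ≤ 1 / 2 := abs_div_sub_le_half_of_abs_sub_mul_le hq_pos hn
  have hhalf : 1 / 2 < a / p := (lt_div_iff₀ hp_pos).mpr (by linarith)
  have hgap : a / p - b / q < 1 :=
    calc a / p - b / q ≤ 2 * b * σ / (P ^ 2 - σ ^ 2) :=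
          div_sub_div_le_of_abs_sub_le hσP (by linarith) hab hp hq
      _ < 1 := (div_lt_one (sub_pos.mpr (pow_lt_pow_left₀ hσP hσ two_ne_zero))).mpr hb
  exact ⟨one_le_of_abs_sub_intCast_le_half hk_near hhalf,
    le_add_one_of_abs_sub_intCast_le_half hk_near hn_near hgap⟩

end LinearOrderedField

lemma pi_div_two_tolerance_bounds {b σ : ℝ} (hb : 0.8 ≤ b) (hσ0 : 0 ≤ σ)
    (hσ : σ < 1 / ((2 * b + 4) * 10)) :
    σ < π / 2 ∧ π / 2 + σ < 2 * 0.8 ∧ 2 * b * σ < (π / 2) ^ 2 - σ ^ 2 := by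
  have hσb : σ * ((2 * b + 4) * 10) < 1 := (lt_div_iff₀ (by linarith)).mp hσ
  have hσ_small : σ < 1 / 56 := by linarith [mul_nonneg hσ0 (sub_nonneg.mpr hb)]
  have hπ_sq : 1 < (π / 2) ^ 2 := one_lt_pow₀ (by linarith [pi_gt_three]) two_ne_zero
  have hσ_sq : σ ^ 2 ≤ σ := pow_le_of_le_one hσ0 (by linarith) two_ne_zero
  exact ⟨by linarith [pi_gt_three], by linarith [pi_lt_d4], by linarith⟩

theorem initial_indices_estimate (a b : ℝ) (ha : 0.8 ≤ a) (hab : a < b)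
    (r : ℕ) (hr : 1 ≤ r)
    (σ : ℝ) (hσ0 : 0 ≤ σ) (hσ : σ < 1 / ((2 * b + 4) * 10 ^ (r + 1)))
    (p₀ q₀ : ℝ) (hp₀ : |Real.pi / 2 - p₀| ≤ σ) (hq₀ : |Real.pi / 2 - q₀| ≤ σ)
    (k₀ n₀ : ℤ) (hk₀ : |a - k₀ * p₀| ≤ p₀ / 2) (hn₀ : |b - n₀ * q₀| ≤ q₀ / 2) :
    1 ≤ k₀ ∧ k₀ ≤ n₀ + 1 := by
  have hb : 0.8 ≤ b := ha.trans hab.le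
  have hσ_ten : σ < 1 / ((2 * b + 4) * 10) := hσ.trans_le <| by
    gcongr
    exact le_self_pow₀ (by norm_num) r.succ_ne_zero
  obtain ⟨hσπ, hπ, hσb⟩ := pi_div_two_tolerance_bounds hb hσ0 hσ_ten
  exact initial_indices_estimate_general hσπ (by linarith) hab.le hσb hp₀ hq₀ hk₀ hn₀
end
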